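/- arXiv:1806.06153 — 4 statements merged into one kernel-verified Lean document; each statement's English description precedes it below -/
import Mathlib

section
/- Let Y be a centered Gaussian random vector in ℝ^p with σ_min² ≤ E[Y(j)²] ≤ σ_max² for all j (σ_min > 0), and let μ be a median of ‖Y‖. Then for all r ≥ 0 and ε ≥ 0, P(‖Y‖ > r − ε) ≤ 20·exp(Φ₄(r+1)ε)·P(‖Y‖ > r), where Φ₄ := 1 + 56(μ + 1.5σ_max)(μ + 4.1σ_max)/(σ_max²σ_min²) + 32π(2.6σ_min + μ)²(σ_min² + 32σ_min μ + 12μ²)/σ_min⁶. -/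
open MeasureTheory ProbabilityTheory

lemma aux_gauss_tail (v : NNReal) (s : ℝ) (hs : 0 < s) (hv : s ^ 2 ≤ (v : ℝ)) :
    1 / 20 ≤ (gaussianReal 0 v).real (Set.Ioi s) := by
  have hvpos : (0 : ℝ) < v := lt_of_lt_of_le (by positivity) hv
  have hv0 : v ≠ 0 := by
    intro h
    simp [h] at hvpos
  have hpdf : ∀ x, gaussianPDFReal 0 v x ≤ (2 / 5) / s := by
    intro x
    rw [gaussianPDFReal_def]
    have h1 : Real.exp (-(x - 0) ^ 2 / (2 * v)) ≤ 1 := by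
      rw [Real.exp_le_one_iff]
      apply div_nonpos_of_nonpos_of_nonneg
      · nlinarith [sq_nonneg (x - 0)]
      · positivity
    have h2 : (5 / 2) * s ≤ √(2 * Real.pi * v) := by
      apply Real.le_sqrt_of_sq_le
      have := Real.pi_gt_d2
      nlinarith [mul_pos (sub_pos.2 this) hvpos]
    have h3 : (√(2 * Real.pi * v))⁻¹ ≤ ((5 / 2) * s)⁻¹ := by
      apply inv_anti₀ (by positivity) h2
    have h4 : ((5 / 2) * s)⁻¹ = (2 / 5) / s := by field_simp
    calc _ ≤ (√(2 * Real.pi * v))⁻¹ * 1 := by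
            apply mul_le_mul_of_nonneg_left h1 (by positivity)
      _ ≤ _ := by rw [mul_one, ← h4]; exact h3
  have hmid : (gaussianReal 0 v).real (Set.Icc (-s) s) ≤ 4 / 5 := by
    rw [measureReal_def, gaussianReal_apply_eq_integral 0 hv0, ENNReal.toReal_ofReal
      (integral_nonneg fun x => gaussianPDFReal_nonneg _ _ _)]
    calc ∫ x in Set.Icc (-s) s, gaussianPDFReal 0 v x
        ≤ ∫ x in Set.Icc (-s) s, (2 / 5) / s := by
          apply setIntegral_mono
          · exact (integrable_gaussianPDFReal 0 v).integrableOn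
          · exact integrableOn_const (by simp)
          · exact hpdf
      _ = 4 / 5 := by
          rw [setIntegral_const]
          simp only [measureReal_def, Real.volume_Icc, smul_eq_mul]
          rw [ENNReal.toReal_ofReal (by linarith)]
          field_simp
          norm_num
  have hsym : (gaussianReal 0 v).real (Set.Iio (-s)) = (gaussianReal 0 v).real (Set.Ioi s) := by
    have h := gaussianReal_map_neg (μ := 0) (v := v)
    rw [neg_zero] at h
    conv_rhs => rw [← h]
    rw [map_measureReal_apply (by fun_prop) measurableSet_Ioi]
    congr 1
    ext x
    simp
  have hcov : (Set.univ : Set ℝ) ⊆ Set.Icc (-s) s ∪ (Set.Iio (-s) ∪ Set.Ioi s) := by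
    intro x _
    simp only [Set.mem_union, Set.mem_Icc, Set.mem_Iio, Set.mem_Ioi]
    by_cases h1 : x < -s
    · tauto
    · by_cases h2 : s < x
      · tauto
      · left; constructor <;> linarith
  have h1 := measureReal_mono (μ := gaussianReal 0 v) hcov
  have h2 := measureReal_union_le (μ := gaussianReal 0 v) (Set.Icc (-s) s)
    (Set.Iio (-s) ∪ Set.Ioi s)
  have h3 := measureReal_union_le (μ := gaussianReal 0 v) (Set.Iio (-s)) (Set.Ioi s)
  rw [probReal_univ] at h1
  linarith

lemma aux_step {p : ℕ} (ν : Measure (Fin p → ℝ)) [IsGaussian ν]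
    (hc : ∀ L : StrongDual ℝ (Fin p → ℝ), ν[L] = 0) (σ : ℝ) (hσ : 0 < σ)
    (htail : ∀ j, 1 / 20 ≤ ν.real {x | σ < x j})
    (htail' : ∀ j, 1 / 20 ≤ ν.real {x | x j < -σ})
    (s r : ℝ) (hs : 0 ≤ s) (hr : 0 ≤ r) (hrs : r ^ 2 ≤ s ^ 2 + σ ^ 2) :
    ν.real {x | s < ‖x‖} ≤ 20 * ν.real {x | r < ‖x‖} := by
  set R := √(s ^ 2 + σ ^ 2) with hR
  have hRpos : 0 < R := Real.sqrt_pos.2 (by positivity)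
  have hRsq : R ^ 2 = s ^ 2 + σ ^ 2 := Real.sq_sqrt (by positivity)
  have hrR : r ≤ R := Real.le_sqrt_of_sq_le hrs
  obtain ⟨θ, hcos, hsin⟩ : ∃ θ : ℝ, Real.cos θ = s / R ∧ Real.sin θ = σ / R := by
    have hle : σ ≤ R := Real.le_sqrt_of_sq_le (by nlinarith [sq_nonneg s])
    refine ⟨Real.arcsin (σ / R), ?_, Real.sin_arcsin ?_ ?_⟩
    · rw [Real.cos_arcsin]
      have : 1 - (σ / R) ^ 2 = (s / R) ^ 2 := by
        field_simp
        linarith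
      rw [this, Real.sqrt_sq (by positivity)]
    · have : 0 ≤ σ / R := by positivity
      linarith
    · rw [div_le_one hRpos]; exact hle
  have hrot := IsGaussian.map_rotation_eq_self_of_forall_strongDual_eq_zero hc θ
  have hmeasR : ∀ t : ℝ, MeasurableSet {x : Fin p → ℝ | t < ‖x‖} := fun t =>
    measurableSet_lt measurable_const measurable_norm
  set A : Set ((Fin p → ℝ) × (Fin p → ℝ)) :=
    {z | R < ‖Real.cos θ • z.1 + Real.sin θ • z.2‖} with hA
  have hAmeas : MeasurableSet A :=
    measurableSet_lt measurable_const (by fun_prop)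
  have hG : ν {x | R < ‖x‖} = (ν.prod ν) A := by
    have h1 : (ν.prod ν) (Prod.fst ⁻¹' {x | R < ‖x‖}) = ν {x | R < ‖x‖} := by
      rw [← Set.prod_univ, Measure.prod_prod, measure_univ, mul_one]
    rw [← h1]
    conv_lhs => rw [← hrot]
    rw [Measure.map_apply (by fun_prop) (measurable_fst (hmeasR R))]
    rfl
  have key : ∀ x ∈ {x : Fin p → ℝ | s < ‖x‖}, ENNReal.ofReal (1 / 20) ≤ ν (Prod.mk x ⁻¹' A) := by
    intro x hx
    have hx' : s < ‖x‖ := hx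
    obtain ⟨j, hj⟩ : ∃ j, s < |x j| := by
      by_contra! hcon
      have := (pi_norm_le_iff_of_nonneg (x := x) hs).2 (fun i => by simpa using hcon i)
      linarith
    have hnorm : ∀ z : Fin p → ℝ, R < |(s / R) * x j + (σ / R) * z j| → z ∈ Prod.mk x ⁻¹' A := by
      intro z hz
      show R < ‖Real.cos θ • x + Real.sin θ • z‖
      refine lt_of_lt_of_le hz ?_
      have := norm_le_pi_norm (Real.cos θ • x + Real.sin θ • z) j
      simpa [hcos, hsin] using this
    rcases le_or_gt 0 (x j) with h0 | h0
    · rw [abs_of_nonneg h0] at hj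
      have hsub : {z : Fin p → ℝ | σ < z j} ⊆ Prod.mk x ⁻¹' A := by
        intro z hz
        have hz' : σ < z j := hz
        apply hnorm
        refine lt_of_lt_of_le ?_ (le_abs_self _)
        have : (s / R) * x j + (σ / R) * z j = (s * x j + σ * z j) / R := by ring
        rw [this, lt_div_iff₀ hRpos]
        nlinarith
      calc ENNReal.ofReal (1 / 20) ≤ ENNReal.ofReal (ν.real {z | σ < z j}) :=
            ENNReal.ofReal_le_ofReal (htail j)
        _ = ν {z | σ < z j} := ofReal_measureReal
        _ ≤ _ := measure_mono hsub
    · rw [abs_of_neg h0] at hj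
      have hsub : {z : Fin p → ℝ | z j < -σ} ⊆ Prod.mk x ⁻¹' A := by
        intro z hz
        have hz' : z j < -σ := hz
        apply hnorm
        refine lt_of_lt_of_le ?_ (neg_le_abs _)
        have : -((s / R) * x j + (σ / R) * z j) = (s * (-x j) + σ * (-z j)) / R := by ring
        rw [this, lt_div_iff₀ hRpos]
        nlinarith
      calc ENNReal.ofReal (1 / 20) ≤ ENNReal.ofReal (ν.real {z | z j < -σ}) :=
            ENNReal.ofReal_le_ofReal (htail' j)
        _ = ν {z | z j < -σ} := ofReal_measureReal
        _ ≤ _ := measure_mono hsub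
  have hmain : ENNReal.ofReal (1 / 20) * ν {x | s < ‖x‖} ≤ ν {x | R < ‖x‖} := by
    rw [hG, Measure.prod_apply hAmeas]
    calc ENNReal.ofReal (1 / 20) * ν {x | s < ‖x‖}
        = ∫⁻ x in {x | s < ‖x‖}, ENNReal.ofReal (1 / 20) ∂ν := by rw [setLIntegral_const]
      _ ≤ ∫⁻ x in {x | s < ‖x‖}, ν (Prod.mk x ⁻¹' A) ∂ν := setLIntegral_mono' (hmeasR s) key
      _ ≤ _ := setLIntegral_le_lintegral _ _
  have h1 := ENNReal.toReal_mono (measure_ne_top _ _) hmain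
  rw [ENNReal.toReal_mul, ENNReal.toReal_ofReal (by norm_num)] at h1
  have h2 : ν.real {x | R < ‖x‖} ≤ ν.real {x | r < ‖x‖} :=
    measureReal_mono (fun x hx => lt_of_le_of_lt hrR hx)
  simp only [measureReal_def] at h2 ⊢
  linarith

lemma aux_chain (g : ℝ → ℝ) (σ : ℝ) (hσ : 0 < σ)
    (hstep : ∀ s r : ℝ, 0 ≤ s → 0 ≤ r → r ^ 2 ≤ s ^ 2 + σ ^ 2 → g s ≤ 20 * g r)
    (hg : ∀ r, 0 ≤ g r) (n : ℕ) :
    ∀ r ε : ℝ, 0 ≤ ε → ε ≤ r → 2 * r * ε ≤ n * σ ^ 2 → g (r - ε) ≤ 20 ^ n * g r := by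
  induction n with
  | zero =>
    intro r ε h0 h1 h2
    have : ε = 0 := by
      simp only [Nat.cast_zero, zero_mul] at h2
      nlinarith
    simp [this]
  | succ n ih =>
    intro r ε h0 h1 h2
    push_cast at h2
    by_cases hc : 2 * r * ε ≤ σ ^ 2
    · have h3 := hstep (r - ε) r (by linarith) (by linarith) (by nlinarith)
      have h4 : (1 : ℝ) ≤ 20 ^ n := one_le_pow₀ (by norm_num)
      have h5 := mul_le_mul_of_nonneg_right h4 (hg r)
      rw [pow_succ]
      nlinarith
    · push Not at hc
      have hrpos : 0 < r := by
        by_contra hr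
        have : ε = 0 := by linarith
        subst this
        nlinarith
      set δ := σ ^ 2 / (2 * r) with hδ
      have hδr : 2 * r * δ = σ ^ 2 := by rw [hδ]; field_simp
      have hδpos : 0 < δ := by positivity
      have hδε : δ < ε := by
        by_contra hcon
        push Not at hcon
        nlinarith
      have h3 := ih (r - δ) (ε - δ) (by linarith) (by linarith) (by nlinarith)
      have h4 := hstep (r - δ) r (by linarith) (by linarith) (by nlinarith)
      have h5 : r - δ - (ε - δ) = r - ε := by ring
      rw [h5] at h3
      calc g (r - ε) ≤ 20 ^ n * g (r - δ) := h3
        _ ≤ 20 ^ n * (20 * g r) := mul_le_mul_of_nonneg_left h4 (by positivity)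
        _ = _ := by ring

lemma aux_exp (g : ℝ → ℝ) (σ : ℝ) (hσ : 0 < σ)
    (hstep : ∀ s r : ℝ, 0 ≤ s → 0 ≤ r → r ^ 2 ≤ s ^ 2 + σ ^ 2 → g s ≤ 20 * g r)
    (hg : ∀ r, 0 ≤ g r) (r ε : ℝ) (h0 : 0 ≤ ε) (h1 : ε ≤ r) :
    g (r - ε) ≤ 20 * Real.exp (8 / σ ^ 2 * r * ε) * g r := by
  have hx : 0 ≤ 2 * r * ε / σ ^ 2 := by
    have : 0 ≤ r := by linarith
    positivity
  set n := ⌊2 * r * ε / σ ^ 2⌋₊ with hn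
  have hlt : 2 * r * ε / σ ^ 2 < n + 1 := Nat.lt_floor_add_one _
  have hle : (n : ℝ) ≤ 2 * r * ε / σ ^ 2 := Nat.floor_le hx
  have h := aux_chain g σ hσ hstep hg (n + 1) r ε h0 h1 (by
    rw [div_lt_iff₀ (by positivity)] at hlt
    push_cast
    exact hlt.le)
  have h20 : (20 : ℝ) ≤ Real.exp 4 := by
    have h := Real.exp_one_gt_d9
    have h4 : Real.exp 4 = Real.exp 1 ^ 4 := by
      rw [← Real.exp_nat_mul]; norm_num
    rw [h4]
    calc (20 : ℝ) ≤ 2.7 ^ 4 := by norm_num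
      _ ≤ _ := pow_le_pow_left₀ (by norm_num) (by linarith) 4
  have hpow : (20 : ℝ) ^ n ≤ Real.exp (8 / σ ^ 2 * r * ε) := by
    calc (20 : ℝ) ^ n ≤ Real.exp 4 ^ n := pow_le_pow_left₀ (by norm_num) h20 n
      _ = Real.exp (n * 4) := by rw [Real.exp_nat_mul]
      _ ≤ _ := by
        apply Real.exp_le_exp.2
        have : 8 / σ ^ 2 * r * ε = 4 * (2 * r * ε / σ ^ 2) := by ring
        linarith
  calc g (r - ε) ≤ 20 ^ (n + 1) * g r := h
    _ = 20 * 20 ^ n * g r := by ring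
    _ ≤ _ := by
      apply mul_le_mul_of_nonneg_right _ (hg r)
      linarith

/-- **Theorem 2.1(2)** (Gaussian tail-ratio bound): if `Y` is a centered Gaussian random
vector in `ℝ^p` (with the `ℓ∞` norm) whose coordinate variances lie between `σmin ^ 2` and
`σmax ^ 2` with `σmin > 0`, and `μ` is a median of `‖Y‖`, then for all `r ≥ 0` and `ε ≥ 0`,
`P(‖Y‖ > r - ε) ≤ 20 * exp (Φ₄ (r+1) ε) * P(‖Y‖ > r)` with the explicit constant `Φ₄`. -/
theorem gaussian_sup_tail_ratio_bound
    {Ω : Type*} [MeasurableSpace Ω] (P : Measure Ω) [IsProbabilityMeasure P]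
    {p : ℕ} (hp : 0 < p) (Y : Ω → Fin p → ℝ) (hYmeas : Measurable Y)
    (hGauss : ∀ t : Fin p → ℝ, ∃ v : NNReal,
      P.map (fun ω => ∑ j, t j * Y ω j) = gaussianReal 0 v)
    (σmin σmax : ℝ) (hσmin : 0 < σmin)
    (hlow : ∀ j, σmin ^ 2 ≤ ∫ ω, (Y ω j) ^ 2 ∂P)
    (hup : ∀ j, ∫ ω, (Y ω j) ^ 2 ∂P ≤ σmax ^ 2)
    (μ : ℝ)
    (hmed₁ : (1 : ℝ) / 2 ≤ (P {ω | ‖Y ω‖ ≤ μ}).toReal)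
    (hmed₂ : (1 : ℝ) / 2 ≤ (P {ω | μ ≤ ‖Y ω‖}).toReal)
    (Φ₄ : ℝ)
    (hΦ₄ : Φ₄ = 1 + 56 * (μ + 1.5 * σmax) * (μ + 4.1 * σmax) / (σmax ^ 2 * σmin ^ 2)
        + 32 * Real.pi * (2.6 * σmin + μ) ^ 2 * (σmin ^ 2 + 32 * σmin * μ + 12 * μ ^ 2)
          / σmin ^ 6) :
    ∀ r : ℝ, 0 ≤ r → ∀ ε : ℝ, 0 ≤ ε →
      (P {ω | r - ε < ‖Y ω‖}).toReal ≤
        20 * Real.exp (Φ₄ * (r + 1) * ε) * (P {ω | r < ‖Y ω‖}).toReal := by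
  intro r hr ε hε
  set ν : Measure (Fin p → ℝ) := P.map Y with hν
  -- every continuous linear form has a centered Gaussian law
  have hL : ∀ L : StrongDual ℝ (Fin p → ℝ), ∃ v : NNReal, ν.map L = gaussianReal 0 v := by
    intro L
    obtain ⟨v, hv⟩ := hGauss (fun j => L (Pi.single j 1))
    refine ⟨v, ?_⟩
    rw [← hv, hν, Measure.map_map (by fun_prop) hYmeas]
    congr 1
    ext ω
    simp only [Function.comp_apply]
    refine (LinearMap.pi_apply_eq_sum_univ (L : (Fin p → ℝ) →ₗ[ℝ] ℝ) (Y ω)).trans ?_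
    apply Finset.sum_congr rfl
    intro j _
    rw [smul_eq_mul, mul_comm]
    congr 1
    show L _ = L _
    congr 1
    ext i
    simp [Pi.single_apply, eq_comm]
  have hGν : IsGaussian ν := isGaussian_of_map_eq_gaussianReal fun L => ⟨0, hL L⟩
  have hc : ∀ L : StrongDual ℝ (Fin p → ℝ), ν[L] = 0 := by
    intro L
    obtain ⟨v, hv⟩ := hL L
    have h := integral_map (μ := ν) (φ := L) (f := fun x : ℝ => x) (by fun_prop) (by fun_prop)
    rw [hv, integral_id_gaussianReal] at h
    exact h.symm
  -- coordinates
  have hcoord : ∀ j, ∃ v : NNReal, σmin ^ 2 ≤ (v : ℝ) ∧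
      ν.map (fun x => x j) = gaussianReal 0 v := by
    intro j
    obtain ⟨v, hv⟩ := hL (ContinuousLinearMap.proj j)
    have hv' : ν.map (fun x => x j) = gaussianReal 0 v := hv
    refine ⟨v, ?_, hv'⟩
    refine (hlow j).trans (le_of_eq ?_)
    have h1 : ∫ ω, (Y ω j) ^ 2 ∂P = ∫ x, x ^ 2 ∂(gaussianReal 0 v) := by
      rw [← hv', integral_map (measurable_pi_apply j).aemeasurable (by fun_prop), hν,
        integral_map hYmeas.aemeasurable
          ((measurable_pi_apply j).pow_const 2).aestronglyMeasurable]
    rw [h1]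
    have h2 := variance_fun_id_gaussianReal (μ := 0) (v := v)
    rw [variance_eq_integral (by fun_prop), integral_id_gaussianReal] at h2
    simpa using h2
  have htail : ∀ j, 1 / 20 ≤ ν.real {x | σmin < x j} := by
    intro j
    obtain ⟨v, hv, hm⟩ := hcoord j
    have h := aux_gauss_tail v σmin hσmin hv
    rw [← hm, map_measureReal_apply (by fun_prop) measurableSet_Ioi] at h
    exact h
  have htail' : ∀ j, 1 / 20 ≤ ν.real {x | x j < -σmin} := by
    intro j
    obtain ⟨v, hv, hm⟩ := hcoord j
    have h := aux_gauss_tail v σmin hσmin hv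
    have hneg := gaussianReal_map_neg (μ := 0) (v := v)
    rw [neg_zero] at hneg
    rw [← hneg, ← hm, map_measureReal_apply (by fun_prop) measurableSet_Ioi,
      map_measureReal_apply (by fun_prop) (measurable_neg measurableSet_Ioi)] at h
    refine h.trans (le_of_eq ?_)
    congr 1
    ext x
    simp
  have hgP : ∀ t : ℝ, ν.real {x | t < ‖x‖} = (P {ω | t < ‖Y ω‖}).toReal := by
    intro t
    rw [hν, map_measureReal_apply hYmeas (measurableSet_lt measurable_const measurable_norm)]
    rfl
  have hg0 : ν.real {x | 0 < ‖x‖} = 1 := by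
    obtain ⟨v, hv, hm⟩ := hcoord ⟨0, hp⟩
    have hv0 : v ≠ 0 := by
      rintro rfl
      simp only [NNReal.coe_zero] at hv
      nlinarith [pow_pos hσmin 2]
    have := nullSingletonClass_gaussianReal (μ := 0) hv0
    have hz : gaussianReal 0 v {(0 : ℝ)} = 0 := measure_singleton 0
    rw [← hm, Measure.map_apply (by fun_prop) (measurableSet_singleton 0)] at hz
    have hae : ∀ᵐ x ∂ν, 0 < ‖x‖ := by
      rw [ae_iff]
      refine measure_mono_null ?_ hz
      intro x hx
      simp only [norm_pos_iff, not_not, Set.mem_ofPred_eq] at hx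
      simp [hx]
    have h1 : ν {x | 0 < ‖x‖} = ν Set.univ := measure_congr (by
      filter_upwards [hae] with x hx
      exact propext ⟨fun _ => trivial, fun _ => hx⟩)
    rw [measureReal_def, h1, measure_univ]
    simp
  have hμ0 : 0 ≤ μ := by
    by_contra hneg
    push Not at hneg
    have : {ω | ‖Y ω‖ ≤ μ} = ∅ := by
      ext ω
      simp only [Set.mem_ofPred_eq, Set.mem_empty_iff_false, iff_false, not_le]
      exact hneg.trans_le (norm_nonneg _)
    rw [this] at hmed₁
    norm_num at hmed₁
  have hmm : σmin ^ 2 ≤ σmax ^ 2 := (hlow ⟨0, hp⟩).trans (hup ⟨0, hp⟩)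
  have hσ2 : 0 < σmin ^ 2 := by positivity
  have hΦ : 8 / σmin ^ 2 ≤ Φ₄ := by
    have hmax2 : 0 < σmax ^ 2 := hσ2.trans_le hmm
    have t2 : -(95 / σmin ^ 2) ≤
        56 * (μ + 1.5 * σmax) * (μ + 4.1 * σmax) / (σmax ^ 2 * σmin ^ 2) := by
      have : -(95 / σmin ^ 2) = (-95 * σmax ^ 2) / (σmax ^ 2 * σmin ^ 2) := by
        have hne : σmax ≠ 0 := by
          rintro rfl
          simp at hmax2
        field_simp
      rw [this]
      apply div_le_div_of_nonneg_right _ (by positivity)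
      nlinarith [sq_nonneg (μ + 2.8 * σmax)]
    have t3 : 600 / σmin ^ 2 ≤ 32 * Real.pi * (2.6 * σmin + μ) ^ 2 *
        (σmin ^ 2 + 32 * σmin * μ + 12 * μ ^ 2) / σmin ^ 6 := by
      have : 600 / σmin ^ 2 = (32 * 3 * (2.5 * σmin) ^ 2 * σmin ^ 2) / σmin ^ 6 := by
        field_simp
        norm_num
      rw [this]
      apply div_le_div_of_nonneg_right _ (by positivity)
      have hpi := Real.pi_gt_three.le
      have e1 : (2.5 * σmin) ^ 2 ≤ (2.6 * σmin + μ) ^ 2 :=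
        pow_le_pow_left₀ (by positivity) (by linarith) 2
      have e2 : σmin ^ 2 ≤ σmin ^ 2 + 32 * σmin * μ + 12 * μ ^ 2 := by
        have : 0 ≤ 32 * σmin * μ + 12 * μ ^ 2 := by positivity
        linarith
      gcongr
    have e3 : 8 / σmin ^ 2 = 8 * (1 / σmin ^ 2) := by ring
    have e4 : 95 / σmin ^ 2 = 95 * (1 / σmin ^ 2) := by ring
    have e5 : 600 / σmin ^ 2 = 600 * (1 / σmin ^ 2) := by ring
    have e6 : 0 < 1 / σmin ^ 2 := by positivity
    rw [e4] at t2
    rw [e5] at t3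
    rw [e3, hΦ₄]
    linarith
  have hΦ0 : 0 ≤ Φ₄ := le_trans (by positivity) hΦ
  -- reduce to `ε ≤ r`
  have hcore := fun r ε => aux_exp (fun t => ν.real {x | t < ‖x‖}) σmin hσmin
    (fun s r => aux_step ν hc σmin hσmin htail htail' s r) (fun _ => measureReal_nonneg) r ε
  have hE : ∀ e : ℝ, 0 ≤ e → e ≤ ε → 8 / σmin ^ 2 * r * e ≤ Φ₄ * (r + 1) * ε := by
    intro e he0 he
    have : 8 / σmin ^ 2 * r ≤ Φ₄ * (r + 1) :=
      mul_le_mul hΦ (by linarith) hr hΦ0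
    exact mul_le_mul this he he0 (by positivity)
  rw [← hgP, ← hgP]
  have hbnd : ∀ e : ℝ, 0 ≤ e → e ≤ ε → e ≤ r → ν.real {x | r - e < ‖x‖} ≤
      20 * Real.exp (Φ₄ * (r + 1) * ε) * ν.real {x | r < ‖x‖} := by
    intro e he0 he her
    refine (hcore r e he0 her).trans ?_
    apply mul_le_mul_of_nonneg_right _ measureReal_nonneg
    apply mul_le_mul_of_nonneg_left _ (by norm_num)
    exact Real.exp_le_exp.2 (hE e he0 he)
  rcases le_total ε r with h | h
  · exact hbnd ε hε le_rfl h
  · have h1 := hbnd r hr h le_rfl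
    rw [sub_self, hg0] at h1
    exact measureReal_le_one.trans h1
end

section
/- Let Z be a centered Gaussian random vector in ℝ^p with E[Z(j)²] ≥ σ² > 0 for every 1 ≤ j ≤ p. Then for every 0 < ε ≤ σ/2 and every λ > 0, P(λ − ε ≤ max_{1≤j≤p}|Z(j)| ≤ λ + ε) ≤ 2ε·K(λ), where K(λ) := 2σ^{-1}(2.6 + λ/σ). -/
open MeasureTheory ProbabilityTheory
open scoped ENNReal


lemma core_mono {E : Type*} [MeasurableSpace E] (ν : Measure E) [IsProbabilityMeasure ν]
    (B : Set (ℝ × E)) (hB : MeasurableSet B)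
    (hmono : ∀ u u' y, u ≤ u' → (u, y) ∈ B → (u', y) ∈ B) (m : ℝ) (hm : 0 ≤ m) (a b : ℝ) :
    ((gaussianReal m 1).prod ν) (B ∩ Prod.fst ⁻¹' Set.Icc a b) * gaussianReal 0 1 (Set.Ioi b) ≤
      gaussianReal 0 1 (Set.Icc a b) *
        ((gaussianReal m 1).prod ν) (B ∩ Prod.fst ⁻¹' Set.Ioi b) := by
  set g : ℝ → ℝ≥0∞ := fun u => ν (Prod.mk u ⁻¹' B) with hg
  have hgm : Measurable g := measurable_measure_prodMk_left hB
  have hgmono : Monotone g := by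
    intro u u' h
    exact measure_mono (fun y hy => hmono u u' y h hy)
  have key : ∀ s : Set ℝ, MeasurableSet s →
      ((gaussianReal m 1).prod ν) (B ∩ Prod.fst ⁻¹' s) =
        ∫⁻ u in s, gaussianPDF m 1 u * g u := by
    intro s hs
    rw [Measure.prod_apply (hB.inter (measurable_fst hs))]
    have : ∀ u, ν (Prod.mk u ⁻¹' (B ∩ Prod.fst ⁻¹' s)) = s.indicator g u := by
      intro u
      by_cases hu : u ∈ s
      · simp [hu, hg, Set.preimage_inter]
        congr 1; ext y; simp [hu]
      · simp only [Set.indicator_of_notMem hu]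
        convert! measure_empty (μ := ν)
        ext y; simp [hu]
    simp_rw [this]
    rw [lintegral_indicator hs, gaussianReal_of_var_ne_zero _ one_ne_zero,
      setLIntegral_withDensity_eq_setLIntegral_mul _ (measurable_gaussianPDF _ _) hgm hs]
    rfl
  have dens : ∀ u, gaussianPDF m 1 u =
      gaussianPDF 0 1 u * ENNReal.ofReal (Real.exp (u * m - m ^ 2 / 2)) := by
    intro u
    simp only [gaussianPDF]
    rw [← ENNReal.ofReal_mul (gaussianPDFReal_nonneg _ _ _)]
    congr 1
    simp only [gaussianPDFReal, mul_assoc, ← Real.exp_add]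
    congr 3
    simp
    ring
  set C : ℝ≥0∞ := ENNReal.ofReal (Real.exp (b * m - m ^ 2 / 2)) * g b with hC
  rw [key _ measurableSet_Icc, key _ measurableSet_Ioi]
  have h1 : ∫⁻ u in Set.Icc a b, gaussianPDF m 1 u * g u ≤ gaussianReal 0 1 (Set.Icc a b) * C := by
    rw [gaussianReal_apply _ one_ne_zero, ← lintegral_mul_const _ (measurable_gaussianPDF _ _)]
    refine setLIntegral_mono' measurableSet_Icc fun u hu => ?_
    rw [dens, mul_assoc, hC]
    have := hgmono hu.2
    have := hu.2
    gcongr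
  have h2 : gaussianReal 0 1 (Set.Ioi b) * C ≤ ∫⁻ u in Set.Ioi b, gaussianPDF m 1 u * g u := by
    rw [gaussianReal_apply _ one_ne_zero, ← lintegral_mul_const _ (measurable_gaussianPDF _ _)]
    refine setLIntegral_mono' measurableSet_Ioi fun u hu => ?_
    rw [dens u, mul_assoc, hC]
    have h3 : b ≤ u := le_of_lt hu
    have := hgmono h3
    gcongr
  calc _ ≤ gaussianReal 0 1 (Set.Icc a b) * C * gaussianReal 0 1 (Set.Ioi b) := by gcongr
    _ = gaussianReal 0 1 (Set.Icc a b) * (gaussianReal 0 1 (Set.Ioi b) * C) := by ring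
    _ ≤ _ := by gcongr

lemma mills (a : ℝ) (ha : 0 ≤ a) :
    gaussianPDFReal 0 1 a ≤ (a + 1) * (gaussianReal 0 1 (Set.Ioi a)).toReal := by
  rw [gaussianReal_apply_eq_integral _ one_ne_zero, ENNReal.toReal_ofReal
    (integral_nonneg fun _ => gaussianPDFReal_nonneg _ _ _)]
  have hpdf : ∀ x, gaussianPDFReal 0 1 x = (√(2 * Real.pi))⁻¹ * Real.exp (- x ^ 2 / 2) := by
    intro x; simp [gaussianPDFReal]
  have hd : ∀ x : ℝ, HasDerivAt (fun x => gaussianPDFReal 0 1 x) (-x * gaussianPDFReal 0 1 x) x := by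
    intro x
    simp only [hpdf]
    have := (((hasDerivAt_id x).pow 2).neg.div_const 2).exp.const_mul (√(2 * Real.pi))⁻¹
    convert! this using 1
    simp; ring
  have hd2 : ∀ x ∈ Set.Ici a, HasDerivAt (fun x => - (gaussianPDFReal 0 1 x / (x + 1)))
      (gaussianPDFReal 0 1 x * ((x ^ 2 + x + 1) / (x + 1) ^ 2)) x := by
    intro x hx
    have hx0 : x + 1 ≠ 0 := by have : a ≤ x := hx; linarith
    have := ((hd x).div ((hasDerivAt_id x).add_const 1) hx0).neg
    convert! this using 1
    simp; field_simp; ring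
  have hexp : Filter.Tendsto (fun x : ℝ => Real.exp (- x ^ 2 / 2)) Filter.atTop (nhds 0) := by
    apply Real.tendsto_exp_atBot.comp
    have : Filter.Tendsto (fun x : ℝ => x ^ 2 / 2) Filter.atTop Filter.atTop :=
      (Filter.tendsto_pow_atTop two_ne_zero).atTop_div_const (by norm_num)
    simpa [neg_div] using this
  have hlim : Filter.Tendsto (fun x => - (gaussianPDFReal 0 1 x / (x + 1))) Filter.atTop (nhds 0) := by
    have h1 : Filter.Tendsto (fun x => gaussianPDFReal 0 1 x) Filter.atTop (nhds 0) := by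
      simp only [hpdf]
      simpa using hexp.const_mul (√(2 * Real.pi))⁻¹
    have h2 : Filter.Tendsto (fun x : ℝ => (x + 1)⁻¹) Filter.atTop (nhds 0) :=
      tendsto_inv_atTop_zero.comp (Filter.tendsto_atTop_add_const_right _ _ Filter.tendsto_id)
    simpa [div_eq_mul_inv] using (h1.mul h2).neg
  have hle : ∀ x ∈ Set.Ioi a, gaussianPDFReal 0 1 x * ((x ^ 2 + x + 1) / (x + 1) ^ 2) ≤
      gaussianPDFReal 0 1 x := by
    intro x hx
    have : a < x := hx
    have hx1 : 0 < x + 1 := by linarith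
    apply mul_le_of_le_one_right (gaussianPDFReal_nonneg _ _ _)
    rw [div_le_one (by positivity)]
    nlinarith
  have hint : IntegrableOn (fun x => gaussianPDFReal 0 1 x * ((x ^ 2 + x + 1) / (x + 1) ^ 2))
      (Set.Ioi a) := by
    refine Integrable.mono' (integrable_gaussianPDFReal 0 1).integrableOn
      (by have := measurable_gaussianPDFReal 0 1; exact Measurable.aestronglyMeasurable (by fun_prop)) ?_
    refine (ae_restrict_iff' measurableSet_Ioi).2 (Filter.Eventually.of_forall fun x hx => ?_)
    have : a < x := hx
    rw [Real.norm_of_nonneg]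
    · exact hle x hx
    · have := gaussianPDFReal_nonneg 0 1 x
      have : 0 < x := by linarith
      positivity
  have hI := integral_Ioi_of_hasDerivAt_of_tendsto' hd2 hint hlim
  have hmon := setIntegral_mono_on hint (integrable_gaussianPDFReal 0 1).integrableOn
    measurableSet_Ioi hle
  rw [hI] at hmon
  have : gaussianPDFReal 0 1 a / (a + 1) ≤ ∫ x in Set.Ioi a, gaussianPDFReal 0 1 x := by linarith
  rw [div_le_iff₀ (by linarith)] at this
  linarith

lemma gauss_Icc (a b : ℝ) (ha : 0 ≤ a) (hab : a ≤ b) :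
    (gaussianReal 0 1 (Set.Icc a b)).toReal ≤ (b - a) * gaussianPDFReal 0 1 a := by
  rw [gaussianReal_apply_eq_integral _ one_ne_zero, ENNReal.toReal_ofReal
    (integral_nonneg fun _ => gaussianPDFReal_nonneg _ _ _)]
  have h := setIntegral_mono_on (s := Set.Icc a b) (f := fun x => gaussianPDFReal 0 1 x)
    (g := fun _ => gaussianPDFReal 0 1 a) (μ := volume)
    (integrable_gaussianPDFReal 0 1).integrableOn (by simp)
    measurableSet_Icc (fun x hx => by
      simp only [gaussianPDFReal]
      have := hx.1
      gcongr)
  refine h.trans ?_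
  simp [hab]

lemma perIndex {Ω : Type*} [MeasurableSpace Ω] (P : Measure Ω) [IsProbabilityMeasure P]
    {ι : Type*} [Fintype ι] (W : ι → Ω → ℝ) (hWm : ∀ i, Measurable (W i))
    (hW : HasGaussianLaw (fun ω i => W i ω) P) (hvar : ∀ i, Var[W i; P] = 1)
    (hmean : ∀ i, 0 ≤ ∫ ω, W i ω ∂P) (e : ι → ℕ) (j : ι) (a b : ℝ) :
    P ({ω | ∀ k, (e k < e j → W k ω < W j ω) ∧ W k ω ≤ W j ω} ∩ W j ⁻¹' Set.Icc a b) *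
        gaussianReal 0 1 (Set.Ioi b) ≤
      gaussianReal 0 1 (Set.Icc a b) *
        P ({ω | ∀ k, (e k < e j → W k ω < W j ω) ∧ W k ω ≤ W j ω} ∩ W j ⁻¹' Set.Ioi b) := by
  have hLp : ∀ i, MemLp (W i) 2 P := fun i => (hW.eval i).memLp_two
  set c : ι → ℝ := fun k => cov[W k, W j; P] with hc
  have hc1 : ∀ k, c k ≤ 1 := by
    intro k
    have h := variance_sub (hLp k) (hLp j)
    have h0 := variance_nonneg (W k - W j) P
    rw [h, hvar, hvar] at h0
    simp only [hc]; linarith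
  set Y : ι → Ω → ℝ := fun k ω => W k ω - c k * W j ω with hY
  have hYm : ∀ k, Measurable (Y k) := fun k => (hWm k).sub ((hWm j).const_mul _)
  have hYm' : Measurable (fun ω k => Y k ω) := measurable_pi_lambda _ hYm
  have hind : IndepFun (W j) (fun ω k => Y k ω) P := by
    have hG : HasGaussianLaw (fun ω => ((fun _ : Unit => W j ω), fun k => Y k ω)) P := by
      let L : (ι → ℝ) →L[ℝ] ((Unit → ℝ) × (ι → ℝ)) :=
        (ContinuousLinearMap.pi fun _ => ContinuousLinearMap.proj j).prod
          (ContinuousLinearMap.pi fun k => ContinuousLinearMap.proj k - c k • ContinuousLinearMap.proj j)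
      exact hW.map L
    have h := HasGaussianLaw.indepFun_of_covariance_eval (X := fun (_ : Unit) => W j) (Y := Y) hG (by
      intro _ k
      rw [covariance_comm]
      simp only [hY]
      rw [covariance_fun_sub_left (hLp k) ((hLp j).const_mul _) (hLp j),
        covariance_const_mul_left, covariance_self (hWm j).aemeasurable, hvar]
      simp [hc])
    exact h.comp (φ := fun f : Unit → ℝ => f ()) (ψ := id) (measurable_pi_apply _) measurable_id
  have hmap := (indepFun_iff_map_prod_eq_prod_map_map (hWm j).aemeasurable hYm'.aemeasurable).1 hind
  rw [(hW.eval j).map_eq_gaussianReal, hvar, Real.toNNReal_one] at hmap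
  have : IsProbabilityMeasure (P.map fun ω k => Y k ω) :=
    Measure.isProbabilityMeasure_map hYm'.aemeasurable
  set B : Set (ℝ × (ι → ℝ)) := {q | ∀ k, (e k < e j → q.2 k < (1 - c k) * q.1) ∧
    q.2 k ≤ (1 - c k) * q.1} with hBdef
  have hB : MeasurableSet B := by
    simp only [hBdef, Set.setOf_forall, Set.setOf_and]
    refine MeasurableSet.iInter fun k => MeasurableSet.inter (MeasurableSet.iInter fun _ => ?_) ?_
    · exact measurableSet_lt (by fun_prop) (by fun_prop)
    · exact measurableSet_le (by fun_prop) (by fun_prop)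
  have hmono : ∀ u u' y, u ≤ u' → (u, y) ∈ B → (u', y) ∈ B := by
    intro u u' y h hu k
    have h2 := mul_le_mul_of_nonneg_left h (sub_nonneg.2 (hc1 k))
    exact ⟨fun hk => lt_of_lt_of_le ((hu k).1 hk) h2, (hu k).2.trans h2⟩
  have key := core_mono (P.map fun ω k => Y k ω) B hB hmono _ (hmean j) a b
  rw [← hmap] at key
  have hpre : ∀ s : Set ℝ, MeasurableSet s →
      (P.map fun ω => (W j ω, fun k => Y k ω)) (B ∩ Prod.fst ⁻¹' s) =
      P ({ω | ∀ k, (e k < e j → W k ω < W j ω) ∧ W k ω ≤ W j ω} ∩ W j ⁻¹' s) := by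
    intro s hs
    rw [Measure.map_apply ((hWm j).prodMk hYm') (hB.inter (measurable_fst hs))]
    congr 1
    ext ω
    simp only [hBdef, hY, Set.mem_preimage, Set.mem_inter_iff, Set.mem_setOf_eq]
    refine and_congr_left fun _ => forall_congr' fun k => ?_
    rw [sub_lt_iff_lt_add, sub_le_iff_le_add]
    ring_nf
  rwa [hpre _ measurableSet_Icc, hpre _ measurableSet_Ioi] at key

lemma maxBound {Ω : Type*} [MeasurableSpace Ω] (P : Measure Ω) [IsProbabilityMeasure P]
    {ι : Type*} [Fintype ι] (W : ι → Ω → ℝ) (hWm : ∀ i, Measurable (W i))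
    (hW : HasGaussianLaw (fun ω i => W i ω) P) (hvar : ∀ i, Var[W i; P] = 1)
    (hmean : ∀ i, 0 ≤ ∫ ω, W i ω ∂P) (a b : ℝ) (ha : 0 ≤ a) (hab : a ≤ b) :
    (P {ω | (∃ i, a ≤ W i ω) ∧ ∀ i, W i ω ≤ b}).toReal ≤ (b - a) * (a + 1) := by
  classical
  let e : ι → ℕ := fun i => (Fintype.equivFin ι i : ℕ)
  have he : Function.Injective e := Fin.val_injective.comp (Fintype.equivFin ι).injective
  set A : ι → Set Ω := fun j => {ω | ∀ k, (e k < e j → W k ω < W j ω) ∧ W k ω ≤ W j ω} with hA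
  have hAm : ∀ j, MeasurableSet (A j) := by
    intro j
    simp only [hA, Set.setOf_forall, Set.setOf_and]
    refine MeasurableSet.iInter fun k => MeasurableSet.inter (MeasurableSet.iInter fun _ => ?_) ?_
    · exact measurableSet_lt (hWm k) (hWm j)
    · exact measurableSet_le (hWm k) (hWm j)
  have hdisj : ∀ i j, i ≠ j → Disjoint (A i) (A j) := by
    intro i j hij
    rw [Set.disjoint_left]
    intro ω hi hj
    rcases lt_or_gt_of_ne (he.ne hij) with h | h
    · exact absurd ((hj i).1 h) (not_lt.2 (hi j).2)
    · exact absurd ((hi j).1 h) (not_lt.2 (hj i).2)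
  set S := {ω | (∃ i, a ≤ W i ω) ∧ ∀ i, W i ω ≤ b} with hS
  have hSsub : S ⊆ ⋃ j, A j ∩ W j ⁻¹' Set.Icc a b := by
    rintro ω ⟨⟨i, hi⟩, hb⟩
    obtain ⟨m, -, hm⟩ := Finset.exists_max_image Finset.univ (fun k => W k ω) ⟨i, Finset.mem_univ i⟩
    obtain ⟨j, hj, hjmin⟩ := Finset.exists_min_image
      (Finset.univ.filter fun k => W k ω = W m ω) e ⟨m, by simp⟩
    simp only [Finset.mem_filter, Finset.mem_univ, true_and] at hj hjmin
    have hle : ∀ k, W k ω ≤ W j ω := fun k => by rw [hj]; exact hm k (Finset.mem_univ k)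
    refine Set.mem_iUnion.2 ⟨j, fun k => ⟨fun hk => lt_of_le_of_ne (hle k) fun h => ?_, hle k⟩,
      hi.trans (hle i), hb j⟩
    exact absurd (hjmin k (h.trans hj)) (not_le.2 hk)
  have hp : P S ≤ ∑ j, P (A j ∩ W j ⁻¹' Set.Icc a b) := by
    refine (measure_mono hSsub).trans ?_
    exact measure_iUnion_fintype_le P _
  have hsum : ∑ j, P (A j ∩ W j ⁻¹' Set.Icc a b) + ∑ j, P (A j ∩ W j ⁻¹' Set.Ioi b) ≤ 1 := by
    rw [← Finset.sum_add_distrib]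
    calc _ ≤ ∑ j, P (A j) := by
          refine Finset.sum_le_sum fun j _ => ?_
          rw [← measure_union]
          · exact measure_mono (by intro ω h; rcases h with h | h <;> exact h.1)
          · rw [Set.disjoint_left]
            rintro ω ⟨_, h⟩ ⟨_, h'⟩
            exact absurd h.2 (not_le.2 h')
          · exact (hAm j).inter (hWm j measurableSet_Ioi)
      _ = P (⋃ j, A j) := by
          rw [measure_iUnion (fun i j hij => hdisj i j hij) hAm, tsum_fintype]
      _ ≤ 1 := prob_le_one
  have hmain : (∑ j, P (A j ∩ W j ⁻¹' Set.Icc a b)) * gaussianReal 0 1 (Set.Ioi b) ≤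
      gaussianReal 0 1 (Set.Icc a b) * ∑ j, P (A j ∩ W j ⁻¹' Set.Ioi b) := by
    rw [Finset.sum_mul, Finset.mul_sum]
    exact Finset.sum_le_sum fun j _ => perIndex P W hWm hW hvar hmean e j a b
  set p := ∑ j, P (A j ∩ W j ⁻¹' Set.Icc a b)
  set q := ∑ j, P (A j ∩ W j ⁻¹' Set.Ioi b)
  have hpq : p * gaussianReal 0 1 (Set.Ioi a) ≤ gaussianReal 0 1 (Set.Icc a b) := by
    calc p * gaussianReal 0 1 (Set.Ioi a)
        ≤ p * (gaussianReal 0 1 (Set.Icc a b) + gaussianReal 0 1 (Set.Ioi b)) := by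
          gcongr
          refine (measure_mono ?_).trans (measure_union_le _ _)
          intro x hx
          rcases le_or_gt x b with h | h
          · exact Or.inl ⟨le_of_lt hx, h⟩
          · exact Or.inr h
      _ ≤ gaussianReal 0 1 (Set.Icc a b) * (p + q) := by
          rw [mul_add, mul_add, mul_comm p]
          gcongr
      _ ≤ gaussianReal 0 1 (Set.Icc a b) * 1 := by gcongr
      _ = _ := mul_one _
  have hS2 : P S * gaussianReal 0 1 (Set.Ioi a) ≤ gaussianReal 0 1 (Set.Icc a b) :=
    le_trans (by gcongr) hpq
  have hr := ENNReal.toReal_mono (measure_ne_top _ _) hS2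
  rw [ENNReal.toReal_mul] at hr
  have h1 := mills a ha
  have h2 := gauss_Icc a b ha hab
  have hpos := gaussianPDFReal_pos 0 1 a one_ne_zero
  have hPS : 0 ≤ (P S).toReal := ENNReal.toReal_nonneg
  have h3 := mul_le_mul_of_nonneg_left h1 hPS
  have h4 : (P S).toReal * gaussianPDFReal 0 1 a ≤ (b - a) * (a + 1) * gaussianPDFReal 0 1 a := by
    calc _ ≤ _ := h3
      _ = (a + 1) * ((P S).toReal * (gaussianReal 0 1 (Set.Ioi a)).toReal) := by ring
      _ ≤ (a + 1) * ((b - a) * gaussianPDFReal 0 1 a) := by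
        have := hr.trans h2
        gcongr
      _ = _ := by ring
  exact le_of_mul_le_mul_right h4 hpos

lemma interval_bound {Ω : Type*} [MeasurableSpace Ω] (P : Measure Ω) [IsProbabilityMeasure P]
    {p : ℕ} (hp : 0 < p) (Z : Ω → Fin p → ℝ) (hZmeas : Measurable Z)
    (hGauss : ∀ t : Fin p → ℝ, ∃ v : NNReal,
      P.map (fun ω => ∑ j, t j * Z ω j) = gaussianReal 0 v)
    (σ : ℝ) (hσ : 0 < σ)
    (hvar : ∀ j, σ ^ 2 ≤ ∫ ω, (Z ω j) ^ 2 ∂P) (x d : ℝ) (hx : 0 ≤ x) (hd : 0 ≤ d) :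
    (P {ω | x ≤ ‖Z ω‖ ∧ ‖Z ω‖ ≤ x + d}).toReal ≤ (d / σ) * (x / σ + 1) := by
  have hZj : ∀ j, Measurable (fun ω => Z ω j) := fun j => (measurable_pi_apply j).comp hZmeas
  have hZ : HasGaussianLaw Z P := by
    refine ⟨isGaussian_of_map_eq_gaussianReal fun L => ?_⟩
    obtain ⟨v, hv⟩ := hGauss fun j => L (Pi.single j 1)
    refine ⟨0, v, ?_⟩
    rw [Measure.map_map (by fun_prop) hZmeas, ← hv]
    congr 1
    ext ω
    simp only [Function.comp]
    conv_lhs => rw [← Finset.univ_sum_single (Z ω), map_sum]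
    refine Finset.sum_congr rfl fun j _ => ?_
    have : Pi.single j (Z ω j) = Z ω j • (Pi.single j 1 : Fin p → ℝ) := by
      ext k; by_cases h : k = j <;> simp [Pi.single_apply, h]
    rw [this, map_smul, smul_eq_mul, mul_comm]
  have hmean : ∀ j, ∫ ω, Z ω j ∂P = 0 := by
    intro j
    obtain ⟨v, hv⟩ := hGauss (Pi.single j 1)
    have h1 : (fun ω => ∑ k, (Pi.single j 1 : Fin p → ℝ) k * Z ω k) = fun ω => Z ω j := by
      ext ω; simp [Pi.single_apply]
    rw [h1] at hv
    have := integral_map (hZj j).aemeasurable (f := fun y : ℝ => y) (μ := P) (by fun_prop)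
    rw [← this, hv, integral_id_gaussianReal]
  have hVar : ∀ j, Var[fun ω => Z ω j; P] = ∫ ω, (Z ω j) ^ 2 ∂P := fun j =>
    variance_of_integral_eq_zero (hZj j).aemeasurable (hmean j)
  set s : Fin p → ℝ := fun j => √(∫ ω, (Z ω j) ^ 2 ∂P) with hs
  have hsσ : ∀ j, σ ≤ s j := fun j => Real.le_sqrt_of_sq_le (hvar j)
  have hspos : ∀ j, 0 < s j := fun j => hσ.trans_le (hsσ j)
  have hssq : ∀ j, (s j) ^ 2 = ∫ ω, (Z ω j) ^ 2 ∂P := fun j =>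
    Real.sq_sqrt ((sq_nonneg σ).trans (hvar j))
  let sg : Bool → ℝ := fun t => if t then 1 else -1
  have hsg : ∀ t, sg t ^ 2 = 1 := by intro t; cases t <;> simp [sg]
  let m : Fin p × Bool → ℝ := fun i => x / σ - x / s i.1
  let W : Fin p × Bool → Ω → ℝ := fun i ω => (sg i.2 / s i.1) * Z ω i.1 + m i
  have hm : ∀ i, 0 ≤ m i := fun i =>
    sub_nonneg.2 (div_le_div_of_nonneg_left hx hσ (hsσ i.1))
  have hWm : ∀ i, Measurable (W i) := fun i => ((hZj i.1).const_mul _).add_const _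
  have hW : HasGaussianLaw (fun ω i => W i ω) P := by
    let L : (Fin p → ℝ) →L[ℝ] (Fin p × Bool → ℝ) :=
      ContinuousLinearMap.pi fun i => (sg i.2 / s i.1) • ContinuousLinearMap.proj i.1
    have h := (hZ.map L).isGaussian_map
    constructor
    have h2 : (fun ω i => W i ω) = (fun y => y + m) ∘ (L ∘ Z) := by
      ext ω i; simp [W, L]
    rw [h2, ← Measure.map_map (by fun_prop) (by fun_prop)]
    infer_instance
  have hWvar : ∀ i, Var[W i; P] = 1 := by
    intro i
    simp only [W]
    rw [variance_add_const (by have := hZj i.1; fun_prop), variance_const_mul, hVar, ← hssq, div_pow, hsg]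
    have := hspos i.1
    field_simp
  have hWmean : ∀ i, 0 ≤ ∫ ω, W i ω ∂P := by
    intro i
    simp only [W]
    rw [integral_add (((hZ.eval i.1).integrable).const_mul _) (by simp), integral_const_mul, hmean]
    simpa using hm i
  have key := maxBound P W hWm hW hWvar hWmean (x / σ) (x / σ + d / σ) (by positivity)
    (by have : 0 ≤ d / σ := by positivity
        linarith)
  rw [add_sub_cancel_left] at key
  refine le_trans (ENNReal.toReal_mono (measure_ne_top _ _) (measure_mono ?_)) key
  rintro ω ⟨h1, h2⟩
  have hWeq : ∀ i, W i ω = (sg i.2 * Z ω i.1 - x) / s i.1 + x / σ := by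
    intro i; simp only [W, m]; ring
  constructor
  · have : ∃ j, x ≤ |Z ω j| := by
      by_contra hcon
      push Not at hcon
      have hx0 : 0 < x := lt_of_le_of_lt (abs_nonneg _) (hcon ⟨0, hp⟩)
      have := (pi_norm_lt_iff (x := Z ω) hx0).2 hcon
      linarith
    obtain ⟨j, hj⟩ := this
    have : ∃ t, x ≤ sg t * Z ω j := by
      rcases le_abs.1 hj with h | h
      · exact ⟨true, by simpa [sg] using h⟩
      · exact ⟨false, by simpa [sg] using h⟩
    obtain ⟨t, ht⟩ := this
    refine ⟨(j, t), ?_⟩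
    rw [hWeq]
    have : 0 ≤ (sg t * Z ω j - x) / s j := div_nonneg (by linarith) (hspos j).le
    simpa using this
  · intro i
    rw [hWeq]
    have h3 : sg i.2 * Z ω i.1 ≤ x + d := by
      refine le_trans ?_ ((norm_le_pi_norm (Z ω) i.1).trans h2)
      rw [Real.norm_eq_abs]
      cases i.2
      · simpa [sg] using neg_le_abs _
      · simpa [sg] using le_abs_self _
    have h4 : (sg i.2 * Z ω i.1 - x) / s i.1 ≤ d / σ := by
      calc _ ≤ d / s i.1 := by
            have := hspos i.1
            gcongr; linarith
        _ ≤ d / σ := div_le_div_of_nonneg_left hd hσ (hsσ i.1)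
    linarith

/-- **Lemma S.1.1** (Giné–Zinn type anti-concentration): if `Z` is a centered Gaussian random
vector in `ℝ^p` with `E[Z(j)²] ≥ σ² > 0` for every coordinate `j`, then for every
`0 < ε ≤ σ/2` and every `λ > 0`,
`P(λ − ε ≤ max_j |Z(j)| ≤ λ + ε) ≤ 2 ε K(λ)` where `K(λ) = 2σ⁻¹(2.6 + λ/σ)`. -/
theorem gaussian_sup_gine_anti_concentration
    {Ω : Type*} [MeasurableSpace Ω] (P : Measure Ω) [IsProbabilityMeasure P]
    {p : ℕ} (hp : 0 < p) (Z : Ω → Fin p → ℝ) (hZmeas : Measurable Z)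
    (hGauss : ∀ t : Fin p → ℝ, ∃ v : NNReal,
      P.map (fun ω => ∑ j, t j * Z ω j) = gaussianReal 0 v)
    (σ : ℝ) (hσ : 0 < σ)
    (hvar : ∀ j, σ ^ 2 ≤ ∫ ω, (Z ω j) ^ 2 ∂P) :
    ∀ ε : ℝ, 0 < ε → ε ≤ σ / 2 → ∀ lam : ℝ, 0 < lam →
      (P {ω | lam - ε ≤ ‖Z ω‖ ∧ ‖Z ω‖ ≤ lam + ε}).toReal ≤
        2 * ε * (2 * σ⁻¹ * (2.6 + lam / σ)) := by
  intro ε hε hεσ lam hlam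
  rcases le_or_gt ε lam with h | h
  · have key := interval_bound P hp Z hZmeas hGauss σ hσ hvar (lam - ε) (2 * ε)
      (by linarith) (by linarith)
    have e1 : lam - ε + 2 * ε = lam + ε := by ring
    rw [e1] at key
    refine key.trans ?_
    have h1 : (lam - ε) / σ ≤ lam / σ := by gcongr; linarith
    have h2 : 0 ≤ lam / σ := by positivity
    have h3 : 2 * ε * (2 * σ⁻¹ * (2.6 + lam / σ)) = 2 * ε / σ * (5.2 + 2 * (lam / σ)) := by
      rw [div_eq_mul_inv (2 * ε)]; ring
    rw [h3]
    have : (lam - ε) / σ + 1 ≤ 5.2 + 2 * (lam / σ) := by norm_num; linarith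
    gcongr
  · have key := interval_bound P hp Z hZmeas hGauss σ hσ hvar 0 (lam + ε)
      le_rfl (by linarith)
    have hsub : {ω | lam - ε ≤ ‖Z ω‖ ∧ ‖Z ω‖ ≤ lam + ε} ⊆
        {ω | 0 ≤ ‖Z ω‖ ∧ ‖Z ω‖ ≤ 0 + (lam + ε)} := by
      rintro ω ⟨_, h2⟩
      exact ⟨norm_nonneg _, by simpa using h2⟩
    refine (ENNReal.toReal_mono (measure_ne_top _ _) (measure_mono hsub)).trans (key.trans ?_)
    have h2 : 0 ≤ lam / σ := by positivity
    have h3 : 2 * ε * (2 * σ⁻¹ * (2.6 + lam / σ)) = 2 * ε / σ * (5.2 + 2 * (lam / σ)) := by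
      rw [div_eq_mul_inv (2 * ε)]; ring
    rw [h3]
    have h4 : 0 / σ + 1 ≤ 5.2 + 2 * (lam / σ) := by norm_num; linarith
    have h5 : lam + ε ≤ 2 * ε := by linarith
    have h6 : 0 ≤ 0 / σ + 1 := by simp
    gcongr
end

section
/- Fix r ≥ 0, ε > 0 and a positive integer p. Let β = 2log(2p)/ε, let F_β(z) := β^{-1} log Σ_{j=1}^{2p} exp(β z(j)) for z ∈ ℝ^{2p} (the softmax), let g₀: ℝ → [0,1] be defined by g₀(t) = 1 for t ≤ 0, g₀(t) = 30∫_t^1 s²(1−s)² ds for 0 ≤ t ≤ 1, and g₀(t) = 0 for t ≥ 1, and for x ∈ ℝ^p set z_x := (xᵀ, −xᵀ)ᵀ ∈ ℝ^{2p} and φ(x) := g₀(2(F_β(z_x − r·𝟏_{2p}) − ε/2)/ε), where 𝟏_{2p} is the all-ones vector. Then φ(x) = 1 whenever max_j |x(j)| ≤ r, φ(x) = 0 whenever max_j |x(j)| > r + ε; equivalently 𝟙{‖x‖∞ ≤ r} ≤ φ(x) ≤ 𝟙{‖x‖∞ ≤ r + ε} for all x ∈ ℝ^p. -/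
open MeasureTheory ProbabilityTheory

/-- The function `g₀` used in the smooth approximation of indicators of `ℓ∞` balls:
`g₀(t) = 1` for `t ≤ 0`, `g₀(t) = 30 ∫_t^1 s²(1-s)² ds` for `0 ≤ t ≤ 1`, `g₀(t) = 0`
for `t ≥ 1`. -/
noncomputable def g0 (t : ℝ) : ℝ :=
  if t ≤ 0 then 1 else if 1 ≤ t then 0 else 30 * ∫ s in t..1, s ^ 2 * (1 - s) ^ 2

theorem g0_mem (t : ℝ) : 0 ≤ g0 t ∧ g0 t ≤ 1 := by
  unfold g0
  split_ifs with h1 h2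
  · norm_num
  · norm_num
  · push Not at h1 h2
    have hc : Continuous fun s : ℝ => s ^ 2 * (1 - s) ^ 2 := by fun_prop
    have hn : ∀ s : ℝ, 0 ≤ s ^ 2 * (1 - s) ^ 2 := fun s => by positivity
    have a1 : 0 ≤ ∫ s in t..1, s ^ 2 * (1 - s) ^ 2 :=
      intervalIntegral.integral_nonneg h2.le fun s _ => hn s
    have a2 : 0 ≤ ∫ s in (0 : ℝ)..t, s ^ 2 * (1 - s) ^ 2 :=
      intervalIntegral.integral_nonneg h1.le fun s _ => hn s
    have a3 := intervalIntegral.integral_add_adjacent_intervals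
      (hc.intervalIntegrable (μ := volume) 0 t) (hc.intervalIntegrable (μ := volume) t 1)
    have a4 : ∫ s in (0 : ℝ)..1, s ^ 2 * (1 - s) ^ 2 = 1 / 30 := by
      have hd : ∀ s ∈ Set.uIcc (0 : ℝ) 1,
          HasDerivAt (fun s : ℝ => s ^ 3 / 3 - s ^ 4 / 2 + s ^ 5 / 5) (s ^ 2 * (1 - s) ^ 2) s := by
        intro s _
        have := (((hasDerivAt_pow 3 s).div_const 3).sub ((hasDerivAt_pow 4 s).div_const 2)).add
          ((hasDerivAt_pow 5 s).div_const 5)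
        refine this.congr_deriv ?_
        norm_num
        ring
      rw [intervalIntegral.integral_eq_sub_of_hasDerivAt hd (hc.intervalIntegrable 0 1)]
      norm_num
    constructor <;> linarith

/-- **Lemma 2.1(1)** (smooth approximation of the indicator of the `ℓ∞` ball): with
`β = 2 log(2p)/ε`, the softmax `F_β` and `φ(x) = g₀(2(F_β(z_x − r 1) − ε/2)/ε)` where
`z_x = (xᵀ, −xᵀ)ᵀ`, one has `φ(x) = 1` whenever `‖x‖∞ ≤ r` and `φ(x) = 0` whenever
`‖x‖∞ > r + ε`; equivalently `𝟙{‖x‖∞ ≤ r} ≤ φ(x) ≤ 𝟙{‖x‖∞ ≤ r + ε}`. -/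
theorem smooth_linfty_ball_indicator_approximation
    (p : ℕ) (hp : 0 < p) (r ε : ℝ) (hr : 0 ≤ r) (hε : 0 < ε)
    (β : ℝ) (hβ : β = 2 * Real.log (2 * p) / ε)
    (Fβ : (Fin p ⊕ Fin p → ℝ) → ℝ)
    (hF : ∀ z : Fin p ⊕ Fin p → ℝ, Fβ z = β⁻¹ * Real.log (∑ j, Real.exp (β * z j)))
    (φ : (Fin p → ℝ) → ℝ)
    (hφ : ∀ x : Fin p → ℝ,
      φ x = g0 (2 * (Fβ (fun j => Sum.elim x (fun j' => -x j') j - r) - ε / 2) / ε)) :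
    ∀ x : Fin p → ℝ,
      (‖x‖ ≤ r → φ x = 1) ∧
      (r + ε < ‖x‖ → φ x = 0) ∧
      Set.indicator {y : Fin p → ℝ | ‖y‖ ≤ r} (fun _ => (1 : ℝ)) x ≤ φ x ∧
      φ x ≤ Set.indicator {y : Fin p → ℝ | ‖y‖ ≤ r + ε} (fun _ => (1 : ℝ)) x := by
  intro x
  have hp1 : (1 : ℝ) ≤ p := by exact_mod_cast hp
  have hL : 0 < Real.log (2 * p) := Real.log_pos (by linarith)
  have hβ0 : 0 < β := by rw [hβ]; positivity
  have hLβ : β⁻¹ * Real.log (2 * p) = ε / 2 := by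
    rw [hβ]; field_simp
  have h1 : ‖x‖ ≤ r → φ x = 1 := by
    intro hx
    have hz : ∀ j, Sum.elim x (fun j' => -x j') j - r ≤ 0 := by
      intro j
      rcases j with j | j
      · have := (Real.norm_eq_abs _ ▸ norm_le_pi_norm x j : |x j| ≤ ‖x‖)
        have := le_abs_self (x j)
        simp only [Sum.elim_inl]
        linarith
      · have := (Real.norm_eq_abs _ ▸ norm_le_pi_norm x j : |x j| ≤ ‖x‖)
        have := neg_le_abs (x j)
        simp only [Sum.elim_inr]
        linarith
    have hS : ∑ j, Real.exp (β * (Sum.elim x (fun j' => -x j') j - r)) ≤ 2 * p := by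
      calc _ ≤ ∑ _j : Fin p ⊕ Fin p, (1 : ℝ) := by
            refine Finset.sum_le_sum fun j _ => ?_
            exact Real.exp_le_one_iff.mpr (mul_nonpos_of_nonneg_of_nonpos hβ0.le (hz j))
        _ = 2 * p := by simp; ring
    have hS0 : 0 < ∑ j, Real.exp (β * (Sum.elim x (fun j' => -x j') j - r)) :=
      Finset.sum_pos (fun _ _ => Real.exp_pos _) ⟨Sum.inl ⟨0, hp⟩, Finset.mem_univ _⟩
    have hFle : Fβ (fun j => Sum.elim x (fun j' => -x j') j - r) ≤ ε / 2 := by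
      rw [hF, ← hLβ]
      exact mul_le_mul_of_nonneg_left (Real.log_le_log hS0 hS) (inv_pos.mpr hβ0).le
    rw [hφ, g0, if_pos]
    exact div_nonpos_of_nonpos_of_nonneg (by linarith) hε.le
  have h2 : r + ε < ‖x‖ → φ x = 0 := by
    intro hx
    have hj : ∃ j, r + ε < Sum.elim x (fun j' => -x j') j := by
      by_contra hcon
      push Not at hcon
      refine absurd hx (not_lt.mpr ?_)
      refine (pi_norm_le_iff_of_nonneg (by linarith)).mpr fun i => ?_
      rw [Real.norm_eq_abs]
      exact abs_le'.mpr ⟨hcon (Sum.inl i), hcon (Sum.inr i)⟩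
    obtain ⟨j, hj⟩ := hj
    have hFge : ε ≤ Fβ (fun j => Sum.elim x (fun j' => -x j') j - r) := by
      rw [hF]
      have hs : Real.exp (β * (Sum.elim x (fun j' => -x j') j - r)) ≤
          ∑ j, Real.exp (β * (Sum.elim x (fun j' => -x j') j - r)) :=
        Finset.single_le_sum
          (f := fun j => Real.exp (β * (Sum.elim x (fun j' => -x j') j - r)))
          (fun _ _ => (Real.exp_pos _).le) (Finset.mem_univ j)
      have hl := Real.log_le_log (Real.exp_pos _) hs
      rw [Real.log_exp] at hl
      rw [inv_mul_eq_div, le_div_iff₀ hβ0]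
      refine le_trans ?_ hl
      rw [mul_comm]
      exact mul_le_mul_of_nonneg_left (by linarith) hβ0.le
    have ht : 1 ≤ 2 * (Fβ (fun j => Sum.elim x (fun j' => -x j') j - r) - ε / 2) / ε := by
      rw [le_div_iff₀ hε]; linarith
    rw [hφ, g0, if_neg (by linarith), if_pos ht]
  have h3 : 0 ≤ φ x ∧ φ x ≤ 1 := by rw [hφ]; exact g0_mem _
  refine ⟨h1, h2, ?_, ?_⟩
  · by_cases h : ‖x‖ ≤ r
    · rw [Set.indicator_of_mem (by exact h), h1 h]
    · rw [Set.indicator_of_notMem (by exact h)]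
      exact h3.1
  · by_cases h : ‖x‖ ≤ r + ε
    · rw [Set.indicator_of_mem (by exact h)]
      exact h3.2
    · rw [Set.indicator_of_notMem (by exact h), h2 (not_le.mp h)]
end

section
/- Let X = (X(1),…,X(p)) be an ℝ^p-valued random vector such that max_{1≤j≤p} ‖X(j)‖_{ψ_α} ≤ K_p for some α > 0 and 0 ≤ K_p < ∞. Then (1) for all q ≥ 1, E[‖X‖∞^q] ≤ K_p^q (2^{1/q}(6q/(eα))^{1/α} + 2^{1/α}(log p)^{1/α})^q; and (2) if moreover α ≥ 1, then E[exp(‖X‖∞ / (3^{1/α} (log 2)^{(1−α)/α} K_p (1 + (log p)^{1/α})))] ≤ 2. -/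
open MeasureTheory ProbabilityTheory

/-- The `ψ_α`-Orlicz (quasi-)norm of a real random variable `W` on `(Ω, P)`:
`‖W‖_{ψ_α} = inf {c > 0 : E[exp((|W|/c)^α) − 1] ≤ 1}` (valued in `ℝ≥0∞`). -/
noncomputable def psiNorm {Ω : Type*} [MeasurableSpace Ω] (α : ℝ) (P : Measure Ω)
    (W : Ω → ℝ) : ENNReal :=
  sInf {c : ENNReal | c ≠ 0 ∧ c ≠ ⊤ ∧
    ∫⁻ ω, ENNReal.ofReal (Real.exp ((|W ω| / c.toReal) ^ α) - 1) ∂P ≤ 1}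

lemma psi_aux_c {Ω : Type*} [MeasurableSpace Ω] (P : Measure Ω)
    (W : Ω → ℝ) (α : ℝ) (hα : 0 < α) (K c : ℝ) (hK : 0 < K) (hc : K < c)
    (h : psiNorm α P W ≤ ENNReal.ofReal K) :
    ∫⁻ ω, ENNReal.ofReal (Real.exp ((|W ω| / c) ^ α) - 1) ∂P ≤ 1 := by
  have h1 : psiNorm α P W < ENNReal.ofReal c :=
    lt_of_le_of_lt h ((ENNReal.ofReal_lt_ofReal_iff (hK.trans hc)).2 hc)
  unfold psiNorm at h1
  obtain ⟨a, ⟨ha0, hat, hai⟩, hac⟩ := sInf_lt_iff.1 h1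
  refine le_trans (lintegral_mono fun ω => ?_) hai
  have hapos : 0 < a.toReal := ENNReal.toReal_pos ha0 hat
  have hle : a.toReal ≤ c := by
    have := ENNReal.toReal_mono ENNReal.ofReal_ne_top hac.le
    rwa [ENNReal.toReal_ofReal (hK.trans hc).le] at this
  apply ENNReal.ofReal_le_ofReal
  have : |W ω| / c ≤ |W ω| / a.toReal := by gcongr
  have h0 : 0 ≤ |W ω| / c := div_nonneg (abs_nonneg _) (hK.trans hc).le
  have := Real.rpow_le_rpow h0 this hα.le
  linarith [Real.exp_le_exp.2 this]

lemma psi_attained {Ω : Type*} [MeasurableSpace Ω] (P : Measure Ω)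
    (W : Ω → ℝ) (hW : Measurable W) (α : ℝ) (hα : 0 < α) (K : ℝ) (hK : 0 < K)
    (h : psiNorm α P W ≤ ENNReal.ofReal K) :
    ∫⁻ ω, ENNReal.ofReal (Real.exp ((|W ω| / K) ^ α) - 1) ∂P ≤ 1 := by
  let c : ℕ → ℝ := fun n => K + 1 / ((n : ℝ) + 1)
  have hclim : Filter.Tendsto c Filter.atTop (nhds K) := by
    simpa [c] using (tendsto_one_div_add_atTop_nhds_zero_nat (𝕜 := ℝ)).const_add K
  have hc : ∀ n, K < c n := fun n => by
    have : 0 < 1 / ((n : ℝ) + 1) := by positivity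
    simp only [c]; linarith
  let f : ℕ → Ω → ENNReal := fun n ω => ENNReal.ofReal (Real.exp ((|W ω| / c n) ^ α) - 1)
  have hlim : ∀ ω, Filter.liminf (fun n => f n ω) Filter.atTop
      = ENNReal.ofReal (Real.exp ((|W ω| / K) ^ α) - 1) := fun ω => by
    apply Filter.Tendsto.liminf_eq
    apply ENNReal.tendsto_ofReal
    apply Filter.Tendsto.sub_const
    apply (Real.continuous_exp.tendsto _).comp
    apply Filter.Tendsto.rpow_const
    · exact Filter.Tendsto.div tendsto_const_nhds hclim hK.ne'
    · right; exact hα.le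
  have hm : ∀ n, Measurable (f n) := fun n => by
    simp only [f]
    have : Measurable fun ω => |W ω| := hW.abs
    fun_prop
  have := lintegral_liminf_le (μ := P) (u := Filter.atTop) hm
  simp only [hlim] at this
  refine this.trans ?_
  refine (Filter.liminf_le_liminf (v := fun _ => (1 : ENNReal)) ?_).trans ?_
  · exact Filter.Eventually.of_forall fun n => psi_aux_c P W α hα K (c n) hK (hc n) h
  · simp

lemma exp_one_bound {Ω : Type*} [MeasurableSpace Ω] (P : Measure Ω) [IsProbabilityMeasure P]
    (W : Ω → ℝ) (hW : Measurable W) (α : ℝ) (hα : 0 < α) (K : ℝ) (hK : 0 < K)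
    (h : psiNorm α P W ≤ ENNReal.ofReal K) :
    ∫⁻ ω, ENNReal.ofReal (Real.exp ((|W ω| / K) ^ α)) ∂P ≤ 2 := by
  have h1 := psi_attained P W hW α hα K hK h
  calc ∫⁻ ω, ENNReal.ofReal (Real.exp ((|W ω| / K) ^ α)) ∂P
      = ∫⁻ ω, (ENNReal.ofReal (Real.exp ((|W ω| / K) ^ α) - 1) + 1) ∂P := by
        congr 1; ext ω
        rw [← ENNReal.ofReal_one, ← ENNReal.ofReal_add _ zero_le_one]
        · congr 1; ring
        · have : 0 ≤ (|W ω| / K) ^ α := by positivity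
          linarith [Real.add_one_le_exp ((|W ω| / K) ^ α)]
    _ = _ + 1 := by rw [lintegral_add_right _ measurable_const]; simp; rfl
    _ ≤ 1 + 1 := by gcongr
    _ = 2 := by norm_num

lemma exp_sup_bound {Ω : Type*} [MeasurableSpace Ω] (P : Measure Ω) [IsProbabilityMeasure P]
    (p : ℕ) (hp : 0 < p) (X : Ω → Fin p → ℝ) (hXmeas : Measurable X)
    (α : ℝ) (hα : 0 < α) (K : ℝ) (hK : 0 < K)
    (hpsi : ∀ j, psiNorm α P (fun ω => X ω j) ≤ ENNReal.ofReal K) :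
    ∫⁻ ω, ENNReal.ofReal (Real.exp ((‖X ω‖ / K) ^ α)) ∂P ≤ ENNReal.ofReal (2 * p) := by
  have hXj : ∀ j, Measurable fun ω => X ω j := fun j => (measurable_pi_apply j).comp hXmeas
  have : Nonempty (Fin p) := ⟨⟨0, hp⟩⟩
  calc ∫⁻ ω, ENNReal.ofReal (Real.exp ((‖X ω‖ / K) ^ α)) ∂P
      ≤ ∫⁻ ω, ∑ j, ENNReal.ofReal (Real.exp ((|X ω j| / K) ^ α)) ∂P := by
        refine lintegral_mono fun ω => ?_
        obtain ⟨j, hj⟩ := Finite.exists_max (fun j => |X ω j|)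
        have h1 : ‖X ω‖ ≤ |X ω j| := (pi_norm_le_iff_of_nonneg (abs_nonneg _)).2 hj
        refine le_trans ?_ (Finset.single_le_sum
          (f := fun j => ENNReal.ofReal (Real.exp ((|X ω j| / K) ^ α)))
          (fun _ _ => zero_le) (Finset.mem_univ j))
        apply ENNReal.ofReal_le_ofReal
        gcongr
    _ = ∑ j, ∫⁻ ω, ENNReal.ofReal (Real.exp ((|X ω j| / K) ^ α)) ∂P := by
        apply lintegral_finsetSum
        intro j _
        have := (hXj j).abs
        fun_prop
    _ ≤ ∑ j : Fin p, 2 := Finset.sum_le_sum fun j _ => exp_one_bound P _ (hXj j) α hα K hK (hpsi j)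
    _ = ENNReal.ofReal (2 * p) := by
        rw [ENNReal.ofReal_mul (by norm_num)]
        simp [mul_comm]

lemma rpow_le_exp (r x : ℝ) (hr : 0 < r) (hx : 0 ≤ x) :
    x ^ r ≤ (r / Real.exp 1) ^ r * Real.exp x := by
  have h1 : x / r ≤ Real.exp (x / r - 1) := by linarith [Real.add_one_le_exp (x / r - 1)]
  have h2 : x ≤ r / Real.exp 1 * Real.exp (x / r) := by
    rw [Real.exp_sub, div_le_iff₀ hr] at h1
    calc x ≤ _ := h1
      _ = _ := by ring
  calc x ^ r ≤ (r / Real.exp 1 * Real.exp (x / r)) ^ r := Real.rpow_le_rpow hx h2 hr.le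
    _ = _ := by
      rw [Real.mul_rpow (by positivity) (by positivity), ← Real.exp_mul, div_mul_cancel₀ _ hr.ne']

/-- pointwise bound on the excess. -/
lemma excess_bound (α q T L b : ℝ) (hα : 0 < α) (hq : 1 ≤ q) (hT : 0 ≤ T) (hb : 0 ≤ b)
    (hbL : b ^ α = 2 * L) :
    (max (T - b) 0) ^ q ≤ (6 * q / (Real.exp 1 * α)) ^ (q / α) * Real.exp (T ^ α - L) := by
  have hr : 0 < q / α := by positivity
  rcases le_total T b with h | h
  · rw [max_eq_right (by linarith), Real.zero_rpow (by linarith)]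
    positivity
  rw [max_eq_left (by linarith)]
  have h1 : (T - b) ^ α ≤ T ^ α := Real.rpow_le_rpow (by linarith) (by linarith) hα.le
  have h2 : b ^ α ≤ T ^ α := Real.rpow_le_rpow hb h hα.le
  -- excess power at most 2 (M - L)
  have h3 : (T - b) ^ α ≤ 2 * (T ^ α - L) := by linarith
  have h5 : 0 ≤ T ^ α - L := by
    have := Real.rpow_nonneg (by linarith : 0 ≤ T - b) α
    linarith
  calc (T - b) ^ q = ((T - b) ^ α) ^ (q / α) := by
        rw [← Real.rpow_mul (by linarith), mul_div_cancel₀ _ hα.ne']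
    _ ≤ (2 * (T ^ α - L)) ^ (q / α) :=
        Real.rpow_le_rpow (Real.rpow_nonneg (by linarith) _) h3 hr.le
    _ = 2 ^ (q / α) * (T ^ α - L) ^ (q / α) := Real.mul_rpow (by norm_num) h5
    _ ≤ 2 ^ (q / α) * ((q / α / Real.exp 1) ^ (q / α) * Real.exp (T ^ α - L)) := by
        gcongr
        exact rpow_le_exp _ _ hr h5
    _ = (2 * (q / α / Real.exp 1)) ^ (q / α) * Real.exp (T ^ α - L) := by
        rw [Real.mul_rpow (by norm_num) (by positivity)]; ring
    _ ≤ _ := by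
        gcongr
        have : 6 * q / (Real.exp 1 * α) = 6 * (q / α / Real.exp 1) := by field_simp
        rw [this]
        gcongr
        norm_num

lemma moment_pos {Ω : Type*} [MeasurableSpace Ω] (P : Measure Ω) [IsProbabilityMeasure P]
    (p : ℕ) (hp : 0 < p) (X : Ω → Fin p → ℝ) (hXmeas : Measurable X)
    (α : ℝ) (hα : 0 < α) (K : ℝ) (hK : 0 < K)
    (hpsi : ∀ j, psiNorm α P (fun ω => X ω j) ≤ ENNReal.ofReal K) (q : ℝ) (hq : 1 ≤ q) :
      ∫⁻ ω, ENNReal.ofReal (‖X ω‖ ^ q) ∂P ≤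
        ENNReal.ofReal (K ^ q *
          ((2 : ℝ) ^ (1/q) * (6 * q / (Real.exp 1 * α)) ^ (1/α)
            + (2 : ℝ) ^ (1/α) * (Real.log p) ^ (1/α)) ^ q) := by
  have hq0 : 0 < q := by linarith
  have hp1 : (1 : ℝ) ≤ p := by exact_mod_cast hp
  have hp0 : (0 : ℝ) < p := by linarith
  have hL : 0 ≤ Real.log p := Real.log_nonneg hp1
  have hXn : Measurable fun ω => ‖X ω‖ := hXmeas.norm
  set b : ℝ := (2 : ℝ) ^ (1/α) * (Real.log p) ^ (1/α) with hbdef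
  set C : ℝ := (2 : ℝ) ^ (1/q) * (6 * q / (Real.exp 1 * α)) ^ (1/α) with hCdef
  have hb : 0 ≤ b := by positivity
  have hC : 0 ≤ C := by positivity
  have hbL : b ^ α = 2 * Real.log p := by
    rw [hbdef, ← Real.mul_rpow (by norm_num) hL, one_div, Real.rpow_inv_rpow (by positivity) hα.ne']
  have hCq : C ^ q = 2 * (6 * q / (Real.exp 1 * α)) ^ (q / α) := by
    rw [hCdef, Real.mul_rpow (by positivity) (by positivity), one_div,
      Real.rpow_inv_rpow (by norm_num) hq0.ne', ← Real.rpow_mul (by positivity)]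
    congr 2; field_simp
  let D : Ω → ℝ := fun ω => max (‖X ω‖ / K - b) 0
  have hD0 : ∀ ω, 0 ≤ D ω := fun ω => le_max_right _ _
  have hDm : Measurable D := by simp only [D]; fun_prop
  have hDint : ∫⁻ ω, ENNReal.ofReal (D ω) ^ q ∂P ≤ ENNReal.ofReal (C ^ q) := by
    set A := (6 * q / (Real.exp 1 * α)) ^ (q / α) with hA
    have hA0 : 0 ≤ A := by positivity
    calc ∫⁻ ω, ENNReal.ofReal (D ω) ^ q ∂P
        ≤ ∫⁻ ω, ENNReal.ofReal (A / p) * ENNReal.ofReal (Real.exp ((‖X ω‖ / K) ^ α)) ∂P := by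
          refine lintegral_mono fun ω => ?_
          rw [ENNReal.ofReal_rpow_of_nonneg (hD0 ω) hq0.le, ← ENNReal.ofReal_mul (by positivity)]
          apply ENNReal.ofReal_le_ofReal
          refine (excess_bound α q (‖X ω‖ / K) (Real.log p) b hα hq (by positivity) hb hbL).trans ?_
          rw [Real.exp_sub, Real.exp_log hp0]
          apply le_of_eq; ring
      _ = ENNReal.ofReal (A / p) * _ := lintegral_const_mul _ (by fun_prop)
      _ ≤ ENNReal.ofReal (A / p) * ENNReal.ofReal (2 * p) := by
          gcongr
          exact exp_sup_bound P p hp X hXmeas α hα K hK hpsi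
      _ = ENNReal.ofReal (C ^ q) := by
          rw [← ENNReal.ofReal_mul (by positivity), hCq]
          congr 1; field_simp
  have hmink := ENNReal.lintegral_Lp_add_le (μ := P) (f := fun ω => ENNReal.ofReal (D ω))
    (g := fun _ => ENNReal.ofReal b) (by fun_prop) (by fun_prop) hq
  have h2 : (∫⁻ ω, ENNReal.ofReal (D ω) ^ q ∂P) ^ (1/q) ≤ ENNReal.ofReal C := by
    calc _ ≤ (ENNReal.ofReal (C ^ q)) ^ (1/q) := by gcongr
      _ = _ := by
        rw [ENNReal.ofReal_rpow_of_nonneg (by positivity) (by positivity), one_div,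
          Real.rpow_rpow_inv hC hq0.ne']
  have h3 : (∫⁻ _ω : Ω, ENNReal.ofReal b ^ q ∂P) ^ (1/q) = ENNReal.ofReal b := by
    rw [lintegral_const, measure_univ, mul_one, one_div, ENNReal.rpow_rpow_inv hq0.ne']
  have h4 : (∫⁻ ω, (ENNReal.ofReal (D ω) + ENNReal.ofReal b) ^ q ∂P)
      ≤ ENNReal.ofReal ((C + b) ^ q) := by
    have : (∫⁻ ω, (ENNReal.ofReal (D ω) + ENNReal.ofReal b) ^ q ∂P) ^ (1/q)
      ≤ ENNReal.ofReal (C + b) := by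
      refine hmink.trans ?_
      rw [h3, ENNReal.ofReal_add hC hb]
      gcongr
    rw [one_div, ENNReal.rpow_inv_le_iff hq0] at this
    rwa [ENNReal.ofReal_rpow_of_nonneg (by positivity) hq0.le] at this
  calc ∫⁻ ω, ENNReal.ofReal (‖X ω‖ ^ q) ∂P
      ≤ ∫⁻ ω, ENNReal.ofReal (K ^ q) *
        (ENNReal.ofReal (D ω) + ENNReal.ofReal b) ^ q ∂P := by
        refine lintegral_mono fun ω => ?_
        rw [← ENNReal.ofReal_add (hD0 ω) hb, ENNReal.ofReal_rpow_of_nonneg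
          (add_nonneg (hD0 ω) hb) hq0.le, ← ENNReal.ofReal_mul (by positivity)]
        apply ENNReal.ofReal_le_ofReal
        rw [← Real.mul_rpow hK.le (add_nonneg (hD0 ω) hb)]
        apply Real.rpow_le_rpow (norm_nonneg _) _ hq0.le
        have : ‖X ω‖ / K - b ≤ D ω := le_max_left _ _
        have h6 : ‖X ω‖ / K ≤ D ω + b := by linarith
        rw [div_le_iff₀ hK] at h6
        linarith
    _ = ENNReal.ofReal (K ^ q) * _ := lintegral_const_mul _ (by fun_prop)
    _ ≤ ENNReal.ofReal (K ^ q) * ENNReal.ofReal ((C + b) ^ q) := by gcongr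
    _ = _ := by rw [← ENNReal.ofReal_mul (by positivity)]

lemma exp_tangent (a x : ℝ) (ha : 0 ≤ a) (ha1 : a ≤ 1) :
    Real.exp (a * x) ≤ a * Real.exp x + (1 - a) := by
  have := convexOn_exp.2 (Set.mem_univ x) (Set.mem_univ 0) ha (by linarith : 0 ≤ 1 - a) (by ring)
  simpa using this

/-- pointwise bound for the exponential moment. -/
lemma exp_point (α T L : ℝ) (hα : 1 ≤ α) (hT : 0 ≤ T) (hL : 0 ≤ L) :
    T / ((3 : ℝ) ^ (1/α) * (Real.log 2) ^ ((1 - α)/α) * (1 + L ^ (1/α)))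
      ≤ (1/α) / (3 * (1 + L)) * T ^ α + (1 - 1/α) * Real.log 2 := by
  have hα0 : 0 < α := by linarith
  have hl2 : 0 < Real.log 2 := Real.log_pos (by norm_num)
  have hθ : 0 ≤ 1 / α := by positivity
  have hθ1 : 1 / α ≤ 1 := by rw [div_le_one hα0]; exact hα
  have h1 : (1 + L) ^ (1/α) ≤ 1 + L ^ (1/α) := by
    simpa using Real.rpow_add_le_add_rpow zero_le_one hL hθ hθ1
  have hY : (T ^ α / (3 * (1 + L))) ^ (1/α) = T / ((3:ℝ) ^ (1/α) * (1 + L) ^ (1/α)) := by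
    rw [Real.div_rpow (by positivity) (by positivity), Real.mul_rpow (by positivity) (by positivity),
      one_div, Real.rpow_rpow_inv hT hα0.ne']
  have hlog : (Real.log 2) ^ (1 - 1/α) = ((Real.log 2) ^ ((1 - α)/α))⁻¹ := by
    rw [← Real.rpow_neg hl2.le]; congr 1; field_simp; ring
  have h2 := Real.geom_mean_le_arith_mean2_weighted (w₁ := 1/α) (w₂ := 1 - 1/α)
    (p₁ := T ^ α / (3 * (1 + L))) (p₂ := Real.log 2) hθ (by linarith) (by positivity) hl2.le (by ring)
  rw [hY, hlog] at h2
  calc T / ((3 : ℝ) ^ (1/α) * (Real.log 2) ^ ((1 - α)/α) * (1 + L ^ (1/α)))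
      ≤ T / ((3 : ℝ) ^ (1/α) * (Real.log 2) ^ ((1 - α)/α) * (1 + L) ^ (1/α)) := by gcongr
    _ = T / ((3:ℝ) ^ (1/α) * (1 + L) ^ (1/α)) * ((Real.log 2) ^ ((1 - α)/α))⁻¹ := by
        field_simp
    _ ≤ _ := h2
    _ = _ := by ring

lemma exp_pos_case {Ω : Type*} [MeasurableSpace Ω] (P : Measure Ω) [IsProbabilityMeasure P]
    (p : ℕ) (hp : 0 < p) (X : Ω → Fin p → ℝ) (hXmeas : Measurable X)
    (α : ℝ) (hα1 : 1 ≤ α) (K : ℝ) (hK : 0 < K)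
    (hpsi : ∀ j, psiNorm α P (fun ω => X ω j) ≤ ENNReal.ofReal K) :
      ∫⁻ ω, ENNReal.ofReal (Real.exp (‖X ω‖ /
          ((3 : ℝ) ^ (1/α) * (Real.log 2) ^ ((1 - α)/α) * K
            * (1 + (Real.log p) ^ (1/α))))) ∂P ≤ 2 := by
  have hα : 0 < α := by linarith
  have hp1 : (1 : ℝ) ≤ p := by exact_mod_cast hp
  have hp0 : (0 : ℝ) < p := by linarith
  have hL : 0 ≤ Real.log p := Real.log_nonneg hp1
  have hXn : Measurable fun ω => ‖X ω‖ := hXmeas.norm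
  set L := Real.log p with hLdef
  have hl2 : 0 < Real.log 2 := Real.log_pos (by norm_num)
  have hl2' := Real.log_two_gt_d9
  have hl2'' := Real.log_two_lt_d9
  have hθ : 0 < 1 / α := by positivity
  have hθ1 : 1 / α ≤ 1 := by rw [div_le_one hα]; exact hα1
  set a := (1/α) / (3 * (1 + L)) with ha
  have ha0 : 0 ≤ a := by positivity
  have ha1 : a ≤ 1 := by
    rw [ha, div_le_one (by positivity)]; linarith
  set l := Real.log 2 + L with hl
  set B := a * l + (1 - 1/α) * Real.log 2 with hB
  have hal : a * l ≤ (1/α) * Real.log 2 := by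
    rw [ha, div_mul_eq_mul_div, div_le_iff₀ (by positivity)]
    rw [mul_assoc]
    apply mul_le_mul_of_nonneg_left _ hθ.le
    nlinarith
  have hexpB : Real.exp B ≤ 2 := by
    rw [← Real.le_log_iff_exp_le (by norm_num)]
    linarith
  have hexpl : Real.exp (-l) = 1 / (2 * p) := by
    rw [Real.exp_neg, hl, Real.exp_add, Real.exp_log (by norm_num), hLdef, Real.exp_log hp0, one_div]
  have hpt : ∀ ω, Real.exp (‖X ω‖ /
          ((3 : ℝ) ^ (1/α) * (Real.log 2) ^ ((1 - α)/α) * K * (1 + L ^ (1/α))))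
      ≤ 2 * a / (2 * p) * Real.exp ((‖X ω‖ / K) ^ α) + 2 * (1 - a) := fun ω => by
    have h1 := exp_point α (‖X ω‖ / K) L hα1 (by positivity) hL
    have h2 : ‖X ω‖ / ((3 : ℝ) ^ (1/α) * (Real.log 2) ^ ((1 - α)/α) * K * (1 + L ^ (1/α)))
      = ‖X ω‖ / K / ((3 : ℝ) ^ (1/α) * (Real.log 2) ^ ((1 - α)/α) * (1 + L ^ (1/α))) := by
      rw [div_div]; congr 1; ring
    rw [h2]
    set M := (‖X ω‖ / K) ^ α
    have h3 := exp_tangent a (M - l) ha0 ha1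
    calc _ ≤ Real.exp (B + a * (M - l)) := by
          apply Real.exp_le_exp.2; rw [hB]; linarith
      _ = Real.exp B * Real.exp (a * (M - l)) := Real.exp_add _ _
      _ ≤ 2 * (a * Real.exp (M - l) + (1 - a)) := by gcongr
      _ = _ := by rw [sub_eq_add_neg M l, Real.exp_add, hexpl]; ring
  calc _ ≤ ∫⁻ ω, (ENNReal.ofReal (2 * a / (2 * p)) * ENNReal.ofReal (Real.exp ((‖X ω‖ / K) ^ α))
          + ENNReal.ofReal (2 * (1 - a))) ∂P := by
        refine lintegral_mono fun ω => ?_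
        rw [← ENNReal.ofReal_mul (by positivity), ← ENNReal.ofReal_add (by positivity) (by linarith)]
        exact ENNReal.ofReal_le_ofReal (hpt ω)
    _ = ENNReal.ofReal (2 * a / (2 * p)) * ∫⁻ ω, ENNReal.ofReal (Real.exp ((‖X ω‖ / K) ^ α)) ∂P
          + ENNReal.ofReal (2 * (1 - a)) := by
        rw [lintegral_add_right _ measurable_const, lintegral_const_mul _ (by fun_prop)]
        simp
    _ ≤ ENNReal.ofReal (2 * a / (2 * p)) * ENNReal.ofReal (2 * p) + ENNReal.ofReal (2 * (1 - a)) := by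
        gcongr
        exact exp_sup_bound P p hp X hXmeas α hα K hK hpsi
    _ = ENNReal.ofReal 2 := by
        rw [← ENNReal.ofReal_mul (by positivity), ← ENNReal.ofReal_add (by positivity) (by linarith)]
        congr 1; field_simp; ring
    _ = 2 := by simp

/-- **Lemma S.4.2** (maximal inequalities under `ψ_α`-Orlicz norm bounds): if
`X = (X(1), …, X(p))` satisfies `max_j ‖X(j)‖_{ψ_α} ≤ K_p` for some `α > 0`, then
(1) for all `q ≥ 1`, `E‖X‖∞^q ≤ K_p^q (2^{1/q}(6q/(eα))^{1/α} + 2^{1/α}(log p)^{1/α})^q`,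
and (2) if moreover `α ≥ 1`, then
`E exp(‖X‖∞/(3^{1/α}(log 2)^{(1−α)/α} K_p (1 + (log p)^{1/α}))) ≤ 2`. -/
theorem subWeibull_sup_moment_bounds
    {Ω : Type*} [MeasurableSpace Ω] (P : Measure Ω) [IsProbabilityMeasure P]
    (p : ℕ) (hp : 0 < p) (X : Ω → Fin p → ℝ) (hXmeas : Measurable X)
    (α : ℝ) (hα : 0 < α) (Kp : ℝ) (hKp : 0 ≤ Kp)
    (hpsi : ∀ j, psiNorm α P (fun ω => X ω j) ≤ ENNReal.ofReal Kp) :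
    (∀ q : ℝ, 1 ≤ q →
      ∫⁻ ω, ENNReal.ofReal (‖X ω‖ ^ q) ∂P ≤
        ENNReal.ofReal (Kp ^ q *
          ((2 : ℝ) ^ (1/q) * (6 * q / (Real.exp 1 * α)) ^ (1/α)
            + (2 : ℝ) ^ (1/α) * (Real.log p) ^ (1/α)) ^ q))
    ∧ (1 ≤ α →
      ∫⁻ ω, ENNReal.ofReal (Real.exp (‖X ω‖ /
          ((3 : ℝ) ^ (1/α) * (Real.log 2) ^ ((1 - α)/α) * Kp
            * (1 + (Real.log p) ^ (1/α))))) ∂P ≤ 2) := by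
  rcases hKp.eq_or_lt with h0 | hpos
  · subst h0
    refine ⟨fun q hq => ?_, fun _ => by simp⟩
    set A := ((2 : ℝ) ^ (1/q) * (6 * q / (Real.exp 1 * α)) ^ (1/α)
            + (2 : ℝ) ^ (1/α) * (Real.log p) ^ (1/α)) ^ q with hA
    have hq0 : 0 < q := by linarith
    have hc : ∀ n : ℕ, ∫⁻ ω, ENNReal.ofReal (‖X ω‖ ^ q) ∂P ≤
        ENNReal.ofReal ((1 / ((n : ℝ) + 1)) ^ q * A) := fun n =>
      moment_pos P p hp X hXmeas α hα (1 / ((n : ℝ) + 1)) (by positivity)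
        (fun j => (hpsi j).trans (by simp)) q hq
    refine ge_of_tendsto' (x := Filter.atTop) ?_ hc
    apply ENNReal.tendsto_ofReal
    apply Filter.Tendsto.mul_const
    exact (tendsto_one_div_add_atTop_nhds_zero_nat (𝕜 := ℝ)).rpow_const (Or.inr hq0.le)
  · exact ⟨fun q hq => moment_pos P p hp X hXmeas α hα Kp hpos hpsi q hq,
      fun h1 => exp_pos_case P p hp X hXmeas α h1 Kp hpos hpsi⟩
end
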